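/- Let S₁, S₂, S₃ be nonempty pairwise disjoint subsets of {1,…,d}, let G₁ = S₁ ∪ S₂ and G₂ = S₂ ∪ S₃, and let p₂(x) = ∏_{i∈G₁} x_i + ∏_{j∈G₂} x_j. At the input x = 1_d, the grouped attribution β = {(G₁, 1), (G₂, 1)} achieves total grouped insertion error 0 over all subsets S ⊆ {1,…,d}, whereas every feature attribution α ∈ ℝ^d has total insertion error Σ_{S ⊆ {1,…,d}} |p₂(x_S) − p₂(0_d) − Σ_{i∈S} α_i| ≥ 1. Hence grouped attributions achieve strictly lower total insertion error than every feature attribution for p₂. -/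

import Mathlib

/-!
Every feature attribution is additive: the scores of a disjoint union `A ∪ B` add up. So whatever
the model gains on `A ∪ B` beyond its gains on `A` and on `B` has to be paid for in the insertion
errors on these three sets. A polynomial has such a gain at each monomial in at least two variables
whose group contains no other group: it vanishes on proper subsets of that group, in particular on
two complementary parts of it. A grouped attribution instead stores each coefficient exactly.
-/

theorem prod_piecewise_zero {ι R : Type*} [DecidableEq ι] [CommMonoidWithZero R]
    (G S : Finset ι) (x : ι → R) :
    ∏ i ∈ G, S.piecewise x 0 i = if G ⊆ S then ∏ i ∈ G, x i else 0 := by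
  simp only [Finset.piecewise, Pi.zero_apply, Finset.prod_ite_zero]
  rfl

theorem union_nontrivial_of_disjoint {ι : Type*} [DecidableEq ι] {A B : Finset ι}
    (hA : A.Nonempty) (hB : B.Nonempty) (hAB : Disjoint A B) : (A ∪ B).Nontrivial := by
  obtain ⟨a, ha⟩ := hA
  obtain ⟨b, hb⟩ := hB
  exact ⟨a, Finset.mem_union_left B ha, b, Finset.mem_union_right A hb,
    Finset.disjoint_iff_ne.mp hAB a ha b hb⟩

section MultilinearPolynomial

variable {ι κ R : Type*} [Fintype κ] [CommSemiring R]

/-- The multilinear polynomial with coefficient `c k` on the monomial of the variables in `G k`;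
the binomial model `p₂` is the case of two groups with coefficients `1`. -/
def multilinearPolynomial (G : κ → Finset ι) (c : κ → R) (x : ι → R) : R :=
  ∑ k, c k * ∏ i ∈ G k, x i

theorem multilinearPolynomial_zero {G : κ → Finset ι} (hG : ∀ k, (G k).Nonempty) (c : κ → R) :
    multilinearPolynomial G c 0 = 0 :=
  Finset.sum_eq_zero fun k _ => by simp [(hG k).ne_empty]

variable [DecidableEq ι]

theorem multilinearPolynomial_piecewise_zero (G : κ → Finset ι) (c : κ → R) (x : ι → R)
    (S : Finset ι) :
    multilinearPolynomial G c (S.piecewise x 0) = ∑ k with G k ⊆ S, c k * ∏ i ∈ G k, x i := by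
  simp only [multilinearPolynomial, prod_piecewise_zero, mul_ite, mul_zero, Finset.sum_filter]

theorem multilinearPolynomial_piecewise_minimal {G : κ → Finset ι} {k : κ}
    (hk : ∀ j, G j ⊆ G k → j = k) (c : κ → R) (x : ι → R) :
    multilinearPolynomial G c ((G k).piecewise x 0) = c k * ∏ i ∈ G k, x i := by
  have only_k (j : κ) : G j ⊆ G k ↔ j = k := ⟨hk j, fun h => h ▸ subset_rfl⟩
  classical
  simp only [multilinearPolynomial_piecewise_zero, only_k, Finset.sum_filter, Finset.sum_ite_eq',
    Finset.mem_univ, if_true]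

theorem multilinearPolynomial_piecewise_ssubset_minimal {G : κ → Finset ι} {k : κ}
    (hk : ∀ j, G j ⊆ G k → j = k) (c : κ → R) (x : ι → R) {S : Finset ι} (hS : S ⊂ G k) :
    multilinearPolynomial G c (S.piecewise x 0) = 0 := by
  rw [multilinearPolynomial_piecewise_zero, Finset.sum_filter]
  refine Finset.sum_eq_zero fun j _ => if_neg fun hj => ?_
  obtain rfl := hk j (hj.trans hS.subset)
  exact hS.not_subset hj

end MultilinearPolynomial

section InsertionError

variable {ι κ : Type*} [DecidableEq ι] [Fintype κ]

/-- The insertion error on `S` of the feature attribution `α` for the model `f` at the input `x`;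
the vector `x_S` is encoded as `S.piecewise x 0`. -/
def insertionError (f : (ι → ℝ) → ℝ) (x α : ι → ℝ) (S : Finset ι) : ℝ :=
  |f (S.piecewise x 0) - f 0 - ∑ i ∈ S, α i|

/-- The grouped insertion error on `S` of the grouped attribution `{(G k, c k)}` for the model `f`
at the input `x`. The groups are indexed by `κ`, so the same pair may occur more than once. -/
def groupedInsertionError (f : (ι → ℝ) → ℝ) (x : ι → ℝ) (G : κ → Finset ι) (c : κ → ℝ)
    (S : Finset ι) : ℝ :=
  |f (S.piecewise x 0) - f 0 - ∑ k with G k ⊆ S, c k|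

theorem groupedInsertionError_multilinearPolynomial {G : κ → Finset ι}
    (hG : ∀ k, (G k).Nonempty) (c : κ → ℝ) (x : ι → ℝ) (S : Finset ι) :
    groupedInsertionError (multilinearPolynomial G c) x G
      (fun k => c k * ∏ i ∈ G k, x i) S = 0 := by
  rw [groupedInsertionError, multilinearPolynomial_piecewise_zero, multilinearPolynomial_zero hG,
    sub_zero, sub_self, abs_zero]

variable [Fintype ι]

theorem abs_interaction_le_sum_insertionError (f : (ι → ℝ) → ℝ) (x α : ι → ℝ) {A B : Finset ι}
    (hA : A.Nonempty) (hB : B.Nonempty) (hAB : Disjoint A B) :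
    |f ((A ∪ B).piecewise x 0) - f (A.piecewise x 0) - f (B.piecewise x 0) + f 0| ≤
      ∑ S, insertionError f x α S := by
  let residual (S : Finset ι) : ℝ := f (S.piecewise x 0) - f 0 - ∑ i ∈ S, α i
  have scores_cancel :
      f ((A ∪ B).piecewise x 0) - f (A.piecewise x 0) - f (B.piecewise x 0) + f 0 =
        residual (A ∪ B) - residual A - residual B := by
    simp only [residual, Finset.sum_union hAB]
    ring
  have union_ne_left : A ∪ B ≠ A := fun h =>
    hB.ne_empty (hAB.eq_bot_of_ge (Finset.union_eq_left.mp h))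
  have union_ne_right : A ∪ B ≠ B := fun h =>
    hA.ne_empty (hAB.eq_bot_of_le (Finset.union_eq_right.mp h))
  calc
    _ = |residual (A ∪ B) - residual A - residual B| := by rw [scores_cancel]
    _ ≤ |residual (A ∪ B)| + |residual A| + |residual B| :=
      (abs_sub _ _).trans (add_le_add_left (abs_sub _ _) _)
    _ = ∑ S ∈ {A ∪ B, A, B}, insertionError f x α S := by
      rw [Finset.sum_insert (by simp [union_ne_left, union_ne_right]),
        Finset.sum_pair (hAB.ne hA.ne_empty), ← add_assoc]
      rfl
    _ ≤ ∑ S, insertionError f x α S :=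
      Finset.sum_le_univ_sum_of_nonneg fun _ => abs_nonneg _

theorem le_sum_insertionError_multilinearPolynomial {G : κ → Finset ι} {k : κ}
    (hk : ∀ j, G j ⊆ G k → j = k) (hnontrivial : (G k).Nontrivial) (c : κ → ℝ) (x α : ι → ℝ) :
    |c k * ∏ i ∈ G k, x i| ≤ ∑ S, insertionError (multilinearPolynomial G c) x α S := by
  obtain ⟨a, ha⟩ := hnontrivial.nonempty
  have vanishes {S : Finset ι} (hS : S ⊂ G k) :
      multilinearPolynomial G c (S.piecewise x 0) = 0 :=
    multilinearPolynomial_piecewise_ssubset_minimal hk c x hS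
  have at_zero : multilinearPolynomial G c 0 = 0 := by
    simpa only [Finset.piecewise_empty] using vanishes hnontrivial.nonempty.empty_ssubset
  have singleton_ssubset : {a} ⊂ G k :=
    (Finset.singleton_subset_iff.mpr ha).ssubset_of_ne hnontrivial.ne_singleton.symm
  have interaction := abs_interaction_le_sum_insertionError (multilinearPolynomial G c) x α
    (Finset.singleton_nonempty a) hnontrivial.erase_nonempty
    (Finset.disjoint_singleton_left.mpr (Finset.notMem_erase a (G k)))
  rwa [← Finset.insert_eq, Finset.insert_erase ha, multilinearPolynomial_piecewise_minimal hk,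
    vanishes singleton_ssubset, vanishes (Finset.erase_ssubset ha), at_zero, sub_zero, sub_zero,
    add_zero] at interaction

theorem binomial_grouped_beats_feature_attribution_insertion_general {G : κ → Finset ι}
    (hG : ∀ k, (G k).Nonempty) {k : κ} (hk : ∀ j, G j ⊆ G k → j = k)
    (hnontrivial : (G k).Nontrivial) (c : κ → ℝ) (x : ι → ℝ) :
    (∑ S, groupedInsertionError (multilinearPolynomial G c) x G
      (fun j => c j * ∏ i ∈ G j, x i) S = 0) ∧
    ∀ α : ι → ℝ,
      |c k * ∏ i ∈ G k, x i| ≤ ∑ S, insertionError (multilinearPolynomial G c) x α S :=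
  ⟨Finset.sum_eq_zero fun S _ => groupedInsertionError_multilinearPolynomial hG c x S,
    le_sum_insertionError_multilinearPolynomial hk hnontrivial c x⟩

end InsertionError

/-- For the binomial model `p₂` with `G₁ = S₁ ∪ S₂`, `G₂ = S₂ ∪ S₃` for
nonempty pairwise disjoint `S₁, S₂, S₃`, at `x = 1_d` the grouped attribution
`{(G₁,1), (G₂,1)}` achieves total grouped insertion error 0 over all subsets `S`,
whereas every feature attribution `α ∈ ℝ^d` has total insertion error
`∑_{S ⊆ {1,…,d}} |p₂(x_S) − p₂(0_d) − ∑_{i∈S} α_i| ≥ 1`; hence grouped attributions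
achieve strictly lower total insertion error. -/
theorem binomial_grouped_beats_feature_attribution_insertion
    (d : ℕ) (S₁ S₂ S₃ : Finset (Fin d))
    (h₁ : S₁.Nonempty) (h₂ : S₂.Nonempty) (h₃ : S₃.Nonempty)
    (h₁₂ : Disjoint S₁ S₂) (h₁₃ : Disjoint S₁ S₃) (h₂₃ : Disjoint S₂ S₃)
    (groups : Fin 2 → Finset (Fin d)) (scores : Fin 2 → ℝ)
    (hgroups : groups = ![S₁ ∪ S₂, S₂ ∪ S₃]) (hscores : scores = fun _ => 1) :
    (∑ S ∈ (Finset.univ : Finset (Fin d)).powerset,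
        |((∏ i ∈ S₁ ∪ S₂, (if i ∈ S then (1 : ℝ) else 0)) +
            ∏ j ∈ S₂ ∪ S₃, (if j ∈ S then (1 : ℝ) else 0)) -
          ((∏ _i ∈ S₁ ∪ S₂, (0 : ℝ)) + ∏ _j ∈ S₂ ∪ S₃, (0 : ℝ)) -
          ∑ k ∈ Finset.univ.filter (fun k => groups k ⊆ S), scores k| = 0) ∧
    ∀ α : Fin d → ℝ,
      ∑ S ∈ (Finset.univ : Finset (Fin d)).powerset,
        |((∏ i ∈ S₁ ∪ S₂, (if i ∈ S then (1 : ℝ) else 0)) +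
            ∏ j ∈ S₂ ∪ S₃, (if j ∈ S then (1 : ℝ) else 0)) -
          ((∏ _i ∈ S₁ ∪ S₂, (0 : ℝ)) + ∏ _j ∈ S₂ ∪ S₃, (0 : ℝ)) -
          ∑ i ∈ S, α i| ≥ 1 := by
  subst hgroups hscores
  have nonempty : ∀ k, (![S₁ ∪ S₂, S₂ ∪ S₃] k).Nonempty :=
    Fin.forall_fin_two.mpr ⟨h₁.inl, h₂.inl⟩
  have not_subset : ¬ S₂ ∪ S₃ ⊆ S₁ ∪ S₂ := fun h =>
    h₃.ne_empty ((Finset.disjoint_union_left.mpr ⟨h₁₃, h₂₃⟩).eq_bot_of_ge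
      (Finset.subset_union_right.trans h))
  have minimal : ∀ j, ![S₁ ∪ S₂, S₂ ∪ S₃] j ⊆ S₁ ∪ S₂ → j = 0 :=
    Fin.forall_fin_two.mpr ⟨fun _ => rfl, fun h => absurd h not_subset⟩
  simpa [multilinearPolynomial, groupedInsertionError, insertionError, Finset.piecewise] using
    binomial_grouped_beats_feature_attribution_insertion_general nonempty (k := 0) minimal
      (union_nontrivial_of_disjoint h₁ h₂ h₁₂) (fun _ => 1) 1
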